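/- For every s > 2, the integral ∫₀¹ (1 − z^{s−1}) / (1 − z²)^{3/2} dz converges and equals √π · Γ(s/2) / Γ((s−1)/2). -/

import Mathlib

open Real Set MeasureTheory

/-!
Since `z / √(1 - z²)` is an antiderivative of `(1 - z²)^(-3/2)`, integration by parts gives
`∫₀¹ (1 - z^p) / (1 - z²)^(3/2) dz = p ∫₀¹ z^p (1 - z²)^(-1/2) dz` with `p = s - 1`. The boundary
term `(1 - z^p) z (1 - z²)^(-1/2)` tends to `0` at `1` because Bernoulli's inequality
`1 - z^p ≤ p (1 - z)` bounds it by `p √(1 - z)`; the same inequality bounds the integrand by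
`p (1 - z)^(-1/2)`, hence convergence. The substitution `u = z²` turns the remaining integral into
the Beta integral `B(s/2, 1/2) / 2`, and `Γ((s+1)/2) = ((s-1)/2) Γ((s-1)/2)` finishes.
-/

lemma one_sub_rpow_le {p z : ℝ} (hp : 1 ≤ p) (hz : 0 ≤ z) : 1 - z ^ p ≤ p * (1 - z) := by
  have h := one_add_mul_self_le_rpow_one_add (s := z - 1) (by linarith) hp
  rw [add_sub_cancel] at h
  linarith

lemma intervalIntegrable_one_sub_rpow :
    IntervalIntegrable (fun z : ℝ => (1 - z) ^ (-(1/2) : ℝ)) volume 0 1 := by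
  have h := (intervalIntegral.intervalIntegrable_rpow' (a := 0) (b := 1)
    (r := (-(1/2) : ℝ)) (by norm_num)).comp_sub_left 1
  simpa using h.symm

lemma intervalIntegrable_integrand {p : ℝ} (hp : 1 ≤ p) :
    IntervalIntegrable (fun z : ℝ => (1 - z ^ p) / (1 - z ^ 2) ^ ((3:ℝ)/2)) volume 0 1 := by
  refine (intervalIntegrable_one_sub_rpow.const_mul p).mono_fun
    (Measurable.aestronglyMeasurable (by fun_prop)) ?_
  refine (ae_restrict_mem measurableSet_uIoc).mono fun z hz => ?_
  rw [uIoc_of_le zero_le_one] at hz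
  obtain ⟨h0, h1⟩ := hz
  rcases h1.eq_or_lt with rfl | h1
  · simp
  have hb := one_sub_rpow_le hp h0.le
  have hz1 : z ^ p ≤ 1 := rpow_le_one h0.le h1.le (by linarith)
  have hq : 0 < 1 - z := by linarith
  have hle : (1 - z) ^ ((3:ℝ)/2) ≤ (1 - z ^ 2) ^ ((3:ℝ)/2) :=
    rpow_le_rpow hq.le (by nlinarith) (by norm_num)
  have hpos : 0 < (1 - z) ^ ((3:ℝ)/2) := rpow_pos_of_pos hq _
  have hsplit : (1 - z) = (1 - z) ^ (-(1/2) : ℝ) * (1 - z) ^ ((3:ℝ)/2) := by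
    rw [← rpow_add hq]; norm_num
  beta_reduce
  rw [norm_of_nonneg (div_nonneg (by linarith) (hpos.le.trans hle)), norm_of_nonneg
    (mul_nonneg (by linarith) (rpow_nonneg hq.le _))]
  calc (1 - z ^ p) / (1 - z ^ 2) ^ ((3:ℝ)/2)
      ≤ (p * (1 - z)) / (1 - z) ^ ((3:ℝ)/2) :=
        div_le_div₀ (mul_nonneg (by linarith) hq.le) hb hpos hle
    _ = p * (1 - z) ^ (-(1/2) : ℝ) := by
        rw [div_eq_iff hpos.ne', mul_assoc, ← hsplit]

/-- The boundary term of the integration by parts extends continuously to `z = 1`. -/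
lemma continuousOn_boundary {p : ℝ} (hp : 1 ≤ p) :
    ContinuousOn (fun z : ℝ => (1 - z ^ p) * z * (1 - z ^ 2) ^ (-(1/2) : ℝ)) (Icc 0 1) := by
  intro z hz
  rcases hz.2.eq_or_lt with rfl | h1
  · have hlim : Filter.Tendsto (fun z : ℝ => p * (1 - z) ^ ((1:ℝ)/2))
        (nhdsWithin 1 (Icc 0 1)) (nhds 0) := by
      have hc : Continuous (fun z : ℝ => p * (1 - z) ^ ((1:ℝ)/2)) := by
        refine continuous_const.mul (Continuous.rpow_const (by fun_prop) fun _ => Or.inr ?_)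
        norm_num
      have := (hc.tendsto 1).mono_left (nhdsWithin_le_nhds (s := Icc 0 1))
      simpa using this
    have hval : (1 - (1:ℝ) ^ p) * 1 * (1 - (1:ℝ) ^ 2) ^ (-(1/2) : ℝ) = 0 := by simp
    unfold ContinuousWithinAt
    beta_reduce
    rw [hval]
    refine tendsto_of_tendsto_of_tendsto_of_le_of_le' tendsto_const_nhds hlim ?_ ?_
    · filter_upwards [self_mem_nhdsWithin] with x hx
      have : x ^ p ≤ 1 := rpow_le_one hx.1 hx.2 (by linarith)
      exact mul_nonneg (mul_nonneg (by linarith) hx.1)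
        (rpow_nonneg (by nlinarith [hx.1, hx.2]) _)
    · filter_upwards [self_mem_nhdsWithin] with x hx
      obtain ⟨h0, h1⟩ := hx
      rcases h1.eq_or_lt with rfl | h1
      · simp
      have hq : 0 < 1 - x := by linarith
      have hz1 : x ^ p ≤ 1 := rpow_le_one h0 h1.le (by linarith)
      have hb := one_sub_rpow_le hp h0
      have hle : (1 - x ^ 2) ^ (-(1/2) : ℝ) ≤ (1 - x) ^ (-(1/2) : ℝ) :=
        rpow_le_rpow_of_nonpos hq (by nlinarith) (by norm_num)
      calc (1 - x ^ p) * x * (1 - x ^ 2) ^ (-(1/2) : ℝ)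
          ≤ (p * (1 - x)) * (1 - x) ^ (-(1/2) : ℝ) := by
            refine mul_le_mul (by nlinarith) hle (rpow_nonneg (by nlinarith) _)
              (mul_nonneg (by linarith) hq.le)
        _ = p * (1 - x) ^ ((1:ℝ)/2) := by
            rw [mul_assoc]
            congr 1
            conv_lhs => enter [1]; rw [← rpow_one (1 - x)]
            rw [← rpow_add hq]; norm_num
  · refine ContinuousAt.continuousWithinAt ?_
    have h2 : 1 - z ^ 2 ≠ 0 := by nlinarith [hz.1]
    refine ContinuousAt.mul (ContinuousAt.mul (continuousAt_const.sub ?_) continuousAt_id) ?_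
    · exact continuousAt_id.rpow_const (Or.inr (by linarith))
    · exact ContinuousAt.rpow_const (by fun_prop) (Or.inl h2)

lemma hasDerivAt_boundary {p z : ℝ} (h0 : 0 < z) (h1 : z < 1) :
    HasDerivAt (fun z : ℝ => (1 - z ^ p) * z * (1 - z ^ 2) ^ (-(1/2) : ℝ))
      ((1 - z ^ p) / (1 - z ^ 2) ^ ((3:ℝ)/2) - p * (z ^ p * (1 - z ^ 2) ^ (-(1/2) : ℝ))) z := by
  have h2 : 0 < 1 - z ^ 2 := by nlinarith
  have hA : HasDerivAt (fun z : ℝ => 1 - z ^ p) (-(p * z ^ (p - 1))) z :=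
    (hasDerivAt_rpow_const (Or.inl h0.ne')).const_sub 1
  have hB : HasDerivAt (fun z : ℝ => 1 - z ^ 2) (-(2 * z)) z := by
    simpa using (hasDerivAt_pow 2 z).const_sub 1
  have hC := hB.rpow_const (p := (-(1/2) : ℝ)) (Or.inl h2.ne')
  convert! (hA.mul (hasDerivAt_id z)).mul hC using 1
  have e1 : (1 - z ^ 2) ^ (-(1/2) - 1 : ℝ) = ((1 - z ^ 2) ^ ((3:ℝ)/2))⁻¹ := by
    rw [← rpow_neg h2.le]; norm_num
  have e2 : (1 - z ^ 2) ^ (-(1/2) : ℝ) = (1 - z ^ 2) * ((1 - z ^ 2) ^ ((3:ℝ)/2))⁻¹ := by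
    rw [← rpow_neg h2.le]
    conv_rhs => enter [1]; rw [← rpow_one (1 - z ^ 2)]
    rw [← rpow_add h2]; norm_num
  have e3 : z ^ p = z ^ (p - 1) * z := by
    rw [rpow_sub_one h0.ne']; field_simp
  simp only [Pi.mul_apply, id]
  rw [e1, e2, e3]
  ring

lemma integral_beta_real {a b : ℝ} (ha : 0 < a) (hb : 0 < b) :
    ∫ u in (0:ℝ)..1, u ^ (a - 1) * (1 - u) ^ (b - 1)
      = Real.Gamma a * Real.Gamma b / Real.Gamma (a + b) := by
  have h := ProbabilityTheory.beta_eq_betaIntegralReal a b ha hb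
  rw [ProbabilityTheory.beta] at h
  have h2 : Complex.betaIntegral a b
      = ((∫ u in (0:ℝ)..1, u ^ (a - 1) * (1 - u) ^ (b - 1) : ℝ) : ℂ) := by
    rw [Complex.betaIntegral, ← intervalIntegral.integral_ofReal]
    refine intervalIntegral.integral_congr fun u hu => ?_
    rw [uIcc_of_le zero_le_one] at hu
    have hu' : 0 ≤ 1 - u := by linarith [hu.2]
    rw [Complex.ofReal_mul, Complex.ofReal_cpow hu.1, Complex.ofReal_cpow hu']
    push_cast
    rfl
  rw [h, h2, Complex.ofReal_re]

lemma intervalIntegrable_rpow_mul {p : ℝ} (hp : 0 ≤ p) :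
    IntervalIntegrable (fun z : ℝ => z ^ p * (1 - z ^ 2) ^ (-(1/2) : ℝ)) volume 0 1 := by
  have h : IntervalIntegrable
      (fun z : ℝ => (z ^ p * (1 + z) ^ (-(1/2) : ℝ)) * (1 - z) ^ (-(1/2) : ℝ)) volume 0 1 := by
    refine intervalIntegrable_one_sub_rpow.continuousOn_mul ?_
    rw [uIcc_of_le zero_le_one]
    refine ContinuousOn.mul (continuousOn_id.rpow_const fun _ _ => Or.inr hp)
      (ContinuousOn.rpow_const (by fun_prop) fun x hx => Or.inl ?_)
    linarith [hx.1]
  refine h.congr fun z hz => ?_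
  rw [uIoc_of_le zero_le_one] at hz
  have e : 1 - z ^ 2 = (1 + z) * (1 - z) := by ring
  rw [e, mul_rpow (by linarith [hz.1]) (by linarith [hz.2]), mul_assoc]

/-- The substitution `u = z²` reduces the integral to `B(s/2, 1/2) / 2`. -/
lemma integral_rpow_mul {s : ℝ} (hs : 2 < s) :
    ∫ z in (0:ℝ)..1, z ^ (s - 1) * (1 - z ^ 2) ^ (-(1/2) : ℝ)
      = Real.Gamma (s / 2) * Real.Gamma (1 / 2) / Real.Gamma (s / 2 + 1 / 2) / 2 := by
  have hcomp : ∀ z ∈ Icc (0:ℝ) 1,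
      ((fun u : ℝ => u ^ (s / 2 - 1) * (1 - u) ^ ((1:ℝ)/2 - 1)) ∘ fun z : ℝ => z ^ 2) z * (2 * z)
        = 2 * (z ^ (s - 1) * (1 - z ^ 2) ^ (-(1/2) : ℝ)) := by
    intro z hz
    have e : z ^ (s - 1) = (z ^ 2) ^ (s / 2 - 1) * z := by
      rw [← rpow_natCast z 2, ← rpow_mul hz.1]
      conv_rhs => enter [2]; rw [← rpow_one z]
      rw [← rpow_add_of_nonneg hz.1 (by push_cast; linarith) zero_le_one]
      congr 1; push_cast; ring
    simp only [Function.comp]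
    rw [e]; norm_num; ring
  have himg : (fun z : ℝ => z ^ 2) '' Icc 0 1 ⊆ Icc 0 1 := by
    rintro _ ⟨z, hz, rfl⟩
    exact ⟨sq_nonneg z, by nlinarith [hz.1, hz.2]⟩
  have himg' : (fun z : ℝ => z ^ 2) '' Ioo 0 1 ⊆ Ioo 0 1 := by
    rintro _ ⟨z, hz, rfl⟩
    exact ⟨by have := hz.1; positivity, by nlinarith [hz.1, hz.2]⟩
  have key := intervalIntegral.integral_comp_mul_deriv''' (a := 0) (b := 1)
    (f := fun z : ℝ => z ^ 2) (f' := fun z => 2 * z)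
    (g := fun u : ℝ => u ^ (s / 2 - 1) * (1 - u) ^ ((1:ℝ)/2 - 1)) (by fun_prop)
    (fun x _ => by simpa using (hasDerivAt_pow 2 x).hasDerivWithinAt)
    (by
      rw [min_eq_left zero_le_one, max_eq_right zero_le_one]
      refine ContinuousOn.mono ?_ himg'
      refine ContinuousOn.mul (continuousOn_id.rpow_const fun _ _ => Or.inr (by linarith))
        (ContinuousOn.rpow_const (by fun_prop) fun x hx => Or.inl ?_)
      linarith [hx.2])
    (by
      rw [uIcc_of_le zero_le_one]
      refine IntegrableOn.mono_set ?_ himg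
      rw [← intervalIntegrable_iff_integrableOn_Icc_of_le zero_le_one]
      have := intervalIntegrable_one_sub_rpow.continuousOn_mul (g := fun u : ℝ => u ^ (s / 2 - 1))
        (continuousOn_id.rpow_const fun _ _ => Or.inr (by linarith))
      convert! this using 4
      norm_num)
    (by
      rw [uIcc_of_le zero_le_one]
      refine IntegrableOn.congr_fun ?_ (fun z hz => (hcomp z hz).symm) measurableSet_Icc
      rw [← intervalIntegrable_iff_integrableOn_Icc_of_le zero_le_one]
      exact (intervalIntegrable_rpow_mul (by linarith)).const_mul 2)
  rw [intervalIntegral.integral_congr (g := fun z => 2 * (z ^ (s - 1) * (1 - z ^ 2) ^ (-(1/2) : ℝ)))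
    (fun z hz => hcomp z (by rwa [uIcc_of_le zero_le_one] at hz)),
    intervalIntegral.integral_const_mul] at key
  norm_num only at key
  have hbeta := integral_beta_real (a := s / 2) (b := 1 / 2) (by linarith) (by norm_num)
  norm_num only at hbeta ⊢
  linarith

/-- For every `s > 2`, the integral `∫₀¹ (1 − z^(s−1))/(1 − z²)^(3/2) dz` converges and equals
`√π · Γ(s/2) / Γ((s−1)/2)`. -/
theorem stmt5 (s : ℝ) (hs : 2 < s) :
    IntervalIntegrable (fun z : ℝ => (1 - z ^ (s - 1)) / (1 - z ^ 2) ^ ((3:ℝ)/2)) volume 0 1 ∧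
    ∫ z in (0:ℝ)..1, (1 - z ^ (s - 1)) / (1 - z ^ 2) ^ ((3:ℝ)/2)
      = Real.sqrt π * Real.Gamma (s / 2) / Real.Gamma ((s - 1) / 2) := by
  have hp : 1 ≤ s - 1 := by linarith
  have hI := intervalIntegrable_integrand hp
  have hJ := (intervalIntegrable_rpow_mul (p := s - 1) (by linarith)).const_mul (s - 1)
  refine ⟨hI, ?_⟩
  have hftc := intervalIntegral.integral_eq_sub_of_hasDerivAt_of_le zero_le_one
    (continuousOn_boundary hp) (fun x hx => hasDerivAt_boundary (p := s - 1) hx.1 hx.2) (hI.sub hJ)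
  rw [intervalIntegral.integral_sub hI hJ, intervalIntegral.integral_const_mul,
    integral_rpow_mul hs] at hftc
  have hz : (1 - (1:ℝ) ^ (s - 1)) * 1 * (1 - (1:ℝ) ^ 2) ^ (-(1/2) : ℝ)
      - (1 - (0:ℝ) ^ (s - 1)) * 0 * (1 - (0:ℝ) ^ 2) ^ (-(1/2) : ℝ) = 0 := by simp
  have hG : Real.Gamma (s / 2 + 1 / 2) = (s - 1) / 2 * Real.Gamma ((s - 1) / 2) := by
    rw [← Real.Gamma_add_one (by linarith)]
    congr 1; ring
  have hG0 : Real.Gamma ((s - 1) / 2) ≠ 0 := (Real.Gamma_pos_of_pos (by linarith)).ne'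
  have hs1 : s - 1 ≠ 0 := by linarith
  rw [sub_eq_zero.mp (hftc.trans hz), hG, Real.Gamma_one_half_eq]
  field_simp
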